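/- arXiv:1701.06082 — 2 statements merged into one kernel-verified Lean document; each statement's English description precedes it below -/
import Mathlib

section
/- Let R be a commutative ring with identity, M a unitary R-module, and S a multiplicative closed set in R such that S(K) ∩ S = ∅ for every submodule K of M. Then P(M_S) = (P(M))_S, where P(M) is the sum of all radical submodules of M (submodules N with Rad N = N) and P(M_S) is the sum of all radical submodules of M_S. -/
/-- `S(K)` for a submodule `K` of an `R`-module `M`: the set of elements of `R` not prime
to `K`. -/
def notPrimeTo {R : Type*} [CommRing R] {M : Type*} [AddCommGroup M] [Module R M]
    (K : Submodule R M) : Set R :=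
  {r : R | ∃ m : M, m ∉ K ∧ r • m ∈ K}

/-- `Rad N` for a submodule `N` of `M`: the intersection of all maximal submodules of the
module `N`. -/
def radSubmodule {R : Type*} [CommRing R] {M : Type*} [AddCommGroup M] [Module R M]
    (N : Submodule R M) : Submodule R M :=
  N ⊓ sInf {L : Submodule R M | L < N ∧ ∀ K : Submodule R M, L < K → K ≤ N → K = N}

/-- `P(M)`: the sum of all radical submodules of `M`, i.e. of all submodules `N` with
`Rad N = N`. -/
def radicalSum (R M : Type*) [CommRing R] [AddCommGroup M] [Module R M] : Submodule R M :=
  sSup {N : Submodule R M | radSubmodule N = N}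

/-! The hypothesis says that every submodule `K` of `M` is saturated with respect to `S`, that is,
`K` is the preimage of `K_S` in `M`. Hence `K ↦ K_S` is an isomorphism of submodule lattices, and
`P(M)` is determined by the submodule lattice alone. -/

section LatticeInvariance

variable {R M R' M' : Type*} [CommRing R] [AddCommGroup M] [Module R M]
  [CommRing R'] [AddCommGroup M'] [Module R' M']

theorem radSubmodule_eq_inf_sInf_covBy (N : Submodule R M) :
    radSubmodule N = N ⊓ sInf {L | L ⋖ N} := by
  have maximal_iff_covBy (L : Submodule R M) :
      (L < N ∧ ∀ K, L < K → K ≤ N → K = N) ↔ L ⋖ N :=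
    and_congr_right fun _ ↦ forall₂_congr fun _ _ ↦ by
      rw [lt_iff_le_and_ne, not_and, not_ne_iff]
  simp only [radSubmodule, maximal_iff_covBy]

theorem map_radSubmodule (e : Submodule R M ≃o Submodule R' M') (N : Submodule R M) :
    e (radSubmodule N) = radSubmodule (e N) := by
  have image_covBy : e '' {L | L ⋖ N} = {L | L ⋖ e N} := by
    ext L
    rw [e.image_eq_preimage_symm, Set.mem_preimage, Set.mem_ofPred_eq, Set.mem_ofPred_eq,
      ← apply_covBy_apply_iff e, e.apply_symm_apply]
  rw [radSubmodule_eq_inf_sInf_covBy, radSubmodule_eq_inf_sInf_covBy, map_inf, map_sInf,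
    image_covBy]

theorem map_radicalSum (e : Submodule R M ≃o Submodule R' M') :
    e (radicalSum R M) = radicalSum R' M' := by
  have image_radical : e '' {N | radSubmodule N = N} = {N | radSubmodule N = N} := by
    ext N
    rw [e.image_eq_preimage_symm, Set.mem_preimage, Set.mem_ofPred_eq, Set.mem_ofPred_eq,
      ← map_radSubmodule, e.symm.injective.eq_iff]
  rw [radicalSum, map_sSup, image_radical, radicalSum]

end LatticeInvariance

section SaturatedSubmodules

variable {R M M' : Type*} (A : Type*) [CommSemiring R] [AddCommMonoid M] [Module R M]
  [CommSemiring A] [Algebra R A] [AddCommMonoid M'] [Module R M'] [Module A M']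
  [IsScalarTower R A M'] (S : Submonoid R) [IsLocalization S A]
  (f : M →ₗ[R] M') [IsLocalizedModule S f]

theorem comap_localized'_eq_self {K : Submodule R M}
    (hK : ∀ s ∈ S, ∀ m : M, s • m ∈ K → m ∈ K) :
    ((K.localized' A S f).restrictScalars R).comap f = K := by
  refine le_antisymm ?_ ((Submodule.localized'gi A S f).gc.le_u_l K)
  rintro m ⟨k, hk, s, hks⟩
  have map_eq : f k = f (s • m) := by
    rwa [IsLocalizedModule.mk'_eq_iff, ← LinearMap.map_smul_of_tower] at hks
  obtain ⟨c, hc⟩ : ∃ c : S, c • k = c • s • m := IsLocalizedModule.exists_of_eq map_eq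
  have smul_smul_mem : c • s • m ∈ K := hc ▸ K.smul_of_tower_mem c hk
  exact hK s s.2 m (hK c c.2 _ smul_smul_mem)

theorem localized'_le_localized'_iff {K L : Submodule R M}
    (hL : ∀ s ∈ S, ∀ m : M, s • m ∈ L → m ∈ L) :
    K.localized' A S f ≤ L.localized' A S f ↔ K ≤ L := by
  have le_comap_iff := (Submodule.localized'gi A S f).gc K (L.localized' A S f)
  rwa [comap_localized'_eq_self A S f hL] at le_comap_iff

/-- The isomorphism `K ↦ K_S` from the lattice of submodules of `M` to that of its localization
`M'`, in the case where every submodule of `M` is saturated with respect to `S`. The inverse takes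
preimages along the localization map `f`. -/
def localizedOrderIso (hS : ∀ K : Submodule R M, ∀ s ∈ S, ∀ m : M, s • m ∈ K → m ∈ K) :
    Submodule R M ≃o Submodule A M' where
  toFun := Submodule.localized' A S f
  invFun N := (N.restrictScalars R).comap f
  left_inv K := comap_localized'_eq_self A S f (hS K)
  right_inv := (Submodule.localized'gi A S f).l_u_eq
  map_rel_iff' {_ L} := localized'_le_localized'_iff A S f (hS L)

end SaturatedSubmodules

theorem notPrimeTo_inter_eq_empty_iff {R M : Type*} [CommRing R] [AddCommGroup M] [Module R M]
    {K : Submodule R M} {S : Set R} :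
    notPrimeTo K ∩ S = ∅ ↔ ∀ s ∈ S, ∀ m : M, s • m ∈ K → m ∈ K := by
  rw [← Set.disjoint_iff_inter_eq_empty, Set.disjoint_right]
  simp only [notPrimeTo, Set.mem_ofPred_eq, not_exists, not_and', not_not]

theorem radicalSum_localized_general {R A M M' : Type*} [CommRing R] [AddCommGroup M] [Module R M]
    [CommRing A] [Algebra R A] [AddCommGroup M'] [Module R M'] [Module A M']
    [IsScalarTower R A M'] (S : Submonoid R) [IsLocalization S A]
    (f : M →ₗ[R] M') [IsLocalizedModule S f]
    (hS : ∀ K : Submodule R M, notPrimeTo K ∩ (S : Set R) = ∅) :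
    radicalSum A M' = (radicalSum R M).localized' A S f :=
  (map_radicalSum <| localizedOrderIso A S f fun K ↦ notPrimeTo_inter_eq_empty_iff.mp (hS K)).symm

/-- Lemma 3.22 (3): let `S` be a multiplicative closed set in `R` with `S(K) ∩ S = ∅` for
every submodule `K` of `M`.  Then `P(M_S) = (P(M))_S`. -/
theorem radicalSum_localized {R : Type*} [CommRing R] {M : Type*} [AddCommGroup M]
    [Module R M] (S : Submonoid R)
    (hS : ∀ K : Submodule R M, notPrimeTo K ∩ (S : Set R) = ∅) :
    radicalSum (Localization S) (LocalizedModule S M) = (radicalSum R M).localized S :=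
  radicalSum_localized_general S (LocalizedModule.mkLinearMap S M) hS
end

section
/- Let R be a commutative ring with identity, M a unitary R-module, and S a multiplicative closed set in R such that S(K) ∩ S = ∅ for every proper submodule K of M. Then M is coatomic if and only if M_S is coatomic. -/
/-- A module `M` is *coatomic* if every proper submodule of `M` is contained in a maximal
submodule of `M` (maximal submodules are the coatoms of the submodule lattice). -/
def IsCoatomicModule (R M : Type*) [CommRing R] [AddCommGroup M] [Module R M] : Prop :=
  ∀ N : Submodule R M, N ≠ ⊤ → ∃ L : Submodule R M, IsCoatom L ∧ N ≤ L

/-!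
Localization `K ↦ K_S` and contraction along `M → M_S` form a Galois insertion between the
submodules of `M` and those of `M_S`. Any Galois insertion `(l, u)` in which only `⊤` is sent to `⊤`
by `l` matches coatoms with coatoms in both directions, and hence transfers coatomicity both ways.
Here `K_S = M_S` says that every element of `M` has a multiple by an element of `S` in `K`, that is,
that `M ⧸ K` is `S`-torsion. If `S(K) ∩ S = ∅`, then no nonzero element of `M ⧸ K` is `S`-torsion,
so this fails as soon as `K ≠ M`.
-/

section GaloisInsertion

variable {α β : Type*} [PartialOrder α] [OrderTop α] [PartialOrder β] [OrderTop β]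
  {l : α → β} {u : β → α}

theorem u_eq_top_iff_of_galoisInsertion (gi : GaloisInsertion l u) {b : β} : u b = ⊤ ↔ b = ⊤ := by
  rw [← gi.gc.u_top, gi.u_injective.eq_iff]

theorem isCoatom_l_of_galoisInsertion (gi : GaloisInsertion l u) {a : α} (ha : IsCoatom a)
    (hla : l a ≠ ⊤) : IsCoatom (l a) := by
  have u_l_ne_top : u (l a) ≠ ⊤ := (u_eq_top_iff_of_galoisInsertion gi).not.mpr hla
  have u_l_eq : u (l a) = a := (ha.le_iff.mp (gi.gc.le_u_l a)).resolve_left u_l_ne_top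
  exact gi.isCoatom_of_image (u_l_eq.symm ▸ ha)

theorem isCoatom_u_of_galoisInsertion (gi : GaloisInsertion l u) (hl : ∀ a, l a = ⊤ → a = ⊤)
    {b : β} (hb : IsCoatom b) : IsCoatom (u b) := by
  refine ⟨(u_eq_top_iff_of_galoisInsertion gi).not.mpr hb.1, fun a hba ↦ hl a ?_⟩
  have b_le : b ≤ l a := (gi.le_l_u b).trans (gi.gc.monotone_l hba.le)
  have ne_b : l a ≠ b := fun hab ↦ hba.not_ge (gi.gc.le_u hab.le)
  exact (hb.le_iff.mp b_le).resolve_right ne_b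

theorem isCoatomic_iff_of_galoisInsertion (gi : GaloisInsertion l u)
    (hl : ∀ a, l a = ⊤ → a = ⊤) : IsCoatomic α ↔ IsCoatomic β := by
  refine ⟨fun _ ↦ ⟨fun b ↦ ?_⟩, fun _ ↦ ⟨fun a ↦ ?_⟩⟩
  · refine (eq_top_or_exists_le_coatom (u b)).imp (u_eq_top_iff_of_galoisInsertion gi).mp ?_
    rintro ⟨a, ha, hba⟩
    exact ⟨l a, isCoatom_l_of_galoisInsertion gi ha (mt (hl a) ha.1),
      (gi.le_l_u b).trans (gi.gc.monotone_l hba)⟩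
  · refine (eq_top_or_exists_le_coatom (l a)).imp (hl a) ?_
    rintro ⟨b, hb, hab⟩
    exact ⟨u b, isCoatom_u_of_galoisInsertion gi hl hb, gi.gc.le_u hab⟩

end GaloisInsertion

section Localization

variable {R M N : Type*} (A : Type*) [CommSemiring R] [CommSemiring A] [Algebra R A]
  [AddCommMonoid M] [Module R M] [AddCommMonoid N] [Module R N] [Module A N] [IsScalarTower R A N]
  (S : Submonoid R) [IsLocalization S A] (f : M →ₗ[R] N) [IsLocalizedModule S f]

theorem apply_mem_localized'_iff {K : Submodule R M} {m : M} :
    f m ∈ K.localized' A S f ↔ ∃ s ∈ S, s • m ∈ K := by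
  rw [Submodule.mem_localized']
  constructor
  · rintro ⟨k, hk, s, hks⟩
    rw [IsLocalizedModule.mk'_eq_iff, ← LinearMap.map_smul_of_tower,
      IsLocalizedModule.eq_iff_exists S] at hks
    obtain ⟨c, hc⟩ := hks
    refine ⟨c * s, S.mul_mem c.2 s.2, ?_⟩
    have smul_mem : c • s • m ∈ K := hc ▸ K.smul_of_tower_mem c hk
    rwa [← mul_smul] at smul_mem
  · rintro ⟨s, hs, hsm⟩
    exact ⟨s • m, hsm, ⟨s, hs⟩, IsLocalizedModule.mk'_cancel f m ⟨s, hs⟩⟩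

theorem localized'_eq_top_iff {K : Submodule R M} :
    K.localized' A S f = ⊤ ↔ ∀ m, ∃ s ∈ S, s • m ∈ K := by
  rw [← u_eq_top_iff_of_galoisInsertion (Submodule.localized'gi A S f), Submodule.eq_top_iff']
  exact forall_congr' fun _ ↦ apply_mem_localized'_iff A S f

end Localization

theorem isCoatomicModule_iff_isCoatomic {R M : Type*} [CommRing R] [AddCommGroup M] [Module R M] :
    IsCoatomicModule R M ↔ IsCoatomic (Submodule R M) := by
  simp only [IsCoatomicModule, isCoatomic_iff, or_iff_not_imp_left, ne_eq]

theorem isCoatomic_iff_localized_general {R A M N : Type*} [CommRing R] [CommRing A] [Algebra R A]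
    [AddCommGroup M] [Module R M] [AddCommGroup N] [Module R N] [Module A N] [IsScalarTower R A N]
    (S : Submonoid R) [IsLocalization S A] (f : M →ₗ[R] N) [IsLocalizedModule S f]
    (hS : ∀ K : Submodule R M, K ≠ ⊤ → ∃ m, ∀ s ∈ S, s • m ∉ K) :
    IsCoatomicModule R M ↔ IsCoatomicModule A N := by
  rw [isCoatomicModule_iff_isCoatomic, isCoatomicModule_iff_isCoatomic]
  refine isCoatomic_iff_of_galoisInsertion (Submodule.localized'gi A S f) fun K hK ↦ ?_
  rw [localized'_eq_top_iff] at hK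
  by_contra K_ne_top
  obtain ⟨m, hm⟩ := hS K K_ne_top
  obtain ⟨s, hs, hsm⟩ := hK m
  exact hm s hs hsm

/-- Proposition 3.24 (1): let `S` be a multiplicative closed set in `R` with `S(K) ∩ S = ∅`
for every proper submodule `K` of `M`.  Then `M` is coatomic iff `M_S` is coatomic. -/
theorem isCoatomic_iff_localized {R : Type*} [CommRing R] {M : Type*} [AddCommGroup M]
    [Module R M] (S : Submonoid R)
    (hS : ∀ K : Submodule R M, K ≠ ⊤ → notPrimeTo K ∩ (S : Set R) = ∅) :
    IsCoatomicModule R M ↔ IsCoatomicModule (Localization S) (LocalizedModule S M) := by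
  refine isCoatomic_iff_localized_general S (LocalizedModule.mkLinearMap S M) fun K hK ↦ ?_
  obtain ⟨m, hm⟩ := SetLike.exists_not_mem_of_ne_top K hK rfl
  exact ⟨m, fun s hs hsm ↦ (hS K hK).subset ⟨⟨m, hm, hsm⟩, hs⟩⟩
end
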